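/- Let f : ℂ → ℂ be a non-constant polynomial. Then for every subset X ⊆ ℂ (with the Euclidean metric), the Nagata dimension of f(X) equals the Nagata dimension of X. -/

import Mathlib

open Set Metric

/-- `S` is `D`-bounded with respect to the distance function `d`:
every two points of `S` are at distance at most `D`. -/
def IsBoundedBy {α : Type*} (d : α → α → ℝ) (S : Set α) (D : ℝ) : Prop :=
  ∀ x ∈ S, ∀ y ∈ S, d x y ≤ D

/-- The Nagata (Assouad–Nagata) dimension of the set `X ⊆ α` with respect to the
distance function `d`, as an element of `ℕ∞`: the infimum of all `n : ℕ` such that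
there is a constant `c > 0` so that for every `s > 0` the set `X` admits a cover by
subsets of diameter at most `c * s` such that every subset of `X` of diameter at
most `s` meets at most `n + 1` members of the cover. -/
noncomputable def nagataDimWith {α : Type*} (d : α → α → ℝ) (X : Set α) : ℕ∞ :=
  sInf {N : ℕ∞ | ∃ n : ℕ, N = (n : ℕ∞) ∧ ∃ c : ℝ, 0 < c ∧ ∀ s : ℝ, 0 < s →
    ∃ B : Set (Set α), (∀ b ∈ B, b ⊆ X) ∧ X ⊆ ⋃₀ B ∧
      (∀ b ∈ B, IsBoundedBy d b (c * s)) ∧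
      ∀ T ⊆ X, IsBoundedBy d T s → {b ∈ B | (T ∩ b).Nonempty}.encard ≤ (n : ℕ∞) + 1}

/-- The Nagata dimension of a subset of a metric space. -/
noncomputable def nagataDim {α : Type*} [PseudoMetricSpace α] (X : Set α) : ℕ∞ :=
  nagataDimWith dist X

/-!
Coverings of multiplicity at most `n + 1` at scale `s` amount to coverings by `n + 1` families of
separated pieces, whence the dimension of a union is the maximum of the dimensions. By compactness
it therefore suffices to treat narrow sectors near infinity, and small narrow sectors at each point
`c` of the plane. In these, one monomial of degree `k + 1` dominates the expansion of the
polynomial `p` at `c` (at `0` for the sectors near infinity), so that `|p x - p y|` is comparable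
to `|x - y| * max |x - c| |y - c| ^ k`. On an annulus of radii `P` and `2 * P` such a map is
bi-Lipschitz up to the factor `P ^ k`, with constants independent of `P`, and so preserves the
dimension there. The annuli with `P` running through the powers of `4` lie at distances comparable
to the larger radius, and so do their images up to the exponent `k + 1`; this lets the coverings of
the single annuli be assembled into one.
-/

open Filter Topology ComplexConjugate

section SeparatedPieces

variable {α β : Type*} [PseudoMetricSpace α] [PseudoMetricSpace β]

/-- `A` is a disjoint union of pieces of diameter at most `D`, distinct pieces being more than `s`
apart. The pieces are the classes of an equivalence relation on the ambient space. -/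
def HasSeparatedPieces (A : Set α) (s D : ℝ) : Prop :=
  ∃ r : Setoid α, ∀ x ∈ A, ∀ y ∈ A, (dist x y ≤ s → r x y) ∧ (r x y → dist x y ≤ D)

lemma HasSeparatedPieces.mono {A B : Set α} {s D D' : ℝ} (h : HasSeparatedPieces B s D)
    (hAB : A ⊆ B) (hD : D ≤ D') : HasSeparatedPieces A s D' := by
  obtain ⟨r, hr⟩ := h
  exact ⟨r, fun x hx y hy => ⟨(hr x (hAB hx) y (hAB hy)).1,
    fun hxy => ((hr x (hAB hx) y (hAB hy)).2 hxy).trans hD⟩⟩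

lemma hasSeparatedPieces_of_isBoundedBy {A : Set α} {D : ℝ} (h : IsBoundedBy dist A D) (s : ℝ) :
    HasSeparatedPieces A s D :=
  ⟨⊤, fun x hx y hy => ⟨fun _ => trivial, fun _ => h x hx y hy⟩⟩

lemma HasSeparatedPieces.of_mapsTo {A : Set α} {B : Set β} {s D s' D' : ℝ}
    (h : HasSeparatedPieces A s D) {φ : β → α} (hφ : MapsTo φ B A)
    (hs : ∀ x ∈ B, ∀ y ∈ B, dist x y ≤ s' → dist (φ x) (φ y) ≤ s)
    (hD : ∀ x ∈ B, ∀ y ∈ B, dist (φ x) (φ y) ≤ D → dist x y ≤ D') :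
    HasSeparatedPieces B s' D' := by
  obtain ⟨r, hr⟩ := h
  exact ⟨r.comap φ, fun x hx y hy =>
    ⟨fun hxy => (hr _ (hφ hx) _ (hφ hy)).1 (hs x hx y hy hxy),
      fun hxy => hD x hx y hy ((hr _ (hφ hx) _ (hφ hy)).2 hxy)⟩⟩

lemma HasSeparatedPieces.iUnion {ι : Type*} {A : ι → Set α} {s D : ℝ}
    (h : ∀ i, HasSeparatedPieces (A i) s D)
    (hsep : ∀ i j, ∀ x ∈ A i, ∀ y ∈ A j, dist x y ≤ s → i = j) :
    HasSeparatedPieces (⋃ i, A i) s D := by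
  choose r hr using h
  rcases isEmpty_or_nonempty ι with _ | _
  · exact ⟨⊤, by simp⟩
  choose! idx hidx using fun x (hx : x ∈ ⋃ i, A i) => mem_iUnion.1 hx
  refine ⟨⟨fun x y => idx x = idx y ∧ r (idx x) x y, fun x => ⟨rfl, (r _).refl x⟩,
    fun ⟨hi, hxy⟩ => ⟨hi.symm, hi ▸ (r _).symm hxy⟩,
    fun ⟨hi, hxy⟩ ⟨hj, hyz⟩ => ⟨hi.trans hj, (r _).trans hxy (hi ▸ hyz)⟩⟩,
    fun x hx y hy => ⟨?_, ?_⟩⟩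
  · intro hxy
    have hi : idx x = idx y := hsep _ _ x (hidx x hx) y (hidx y hy) hxy
    exact ⟨hi, (hr _ x (hidx x hx) y (hi ▸ hidx y hy)).1 hxy⟩
  · rintro ⟨hi, hxy⟩
    exact (hr _ x (hidx x hx) y (hi ▸ hidx y hy)).2 hxy

lemma HasSeparatedPieces.union_of_separated {A B : Set α} {s D : ℝ}
    (hA : HasSeparatedPieces A s D) (hB : HasSeparatedPieces B s D)
    (hsep : ∀ x ∈ A, ∀ y ∈ B, s < dist x y) : HasSeparatedPieces (A ∪ B) s D := by
  rw [union_eq_iUnion]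
  refine .iUnion (Bool.forall_bool.2 ⟨hB, hA⟩) ?_
  rintro (_ | _) (_ | _) x hx y hy hxy
  · rfl
  · exact absurd hxy (dist_comm y x ▸ hsep y hy x hx).not_ge
  · exact absurd hxy (hsep x hx y hy).not_ge
  · rfl

/-- Pieces of `A` that come within `s` of `B` are absorbed into the pieces of `B`, by sending each
of their points to a nearby point of `B`; the remaining pieces of `A` are far from everything. -/
lemma HasSeparatedPieces.union {A B : Set α} {s D D' : ℝ} (hs : 0 ≤ s) (hD : 0 ≤ D) (hD' : 0 ≤ D')
    (hA : HasSeparatedPieces A s D) (hB : HasSeparatedPieces B (2 * D + 3 * s) D') :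
    HasSeparatedPieces (A ∪ B) s (2 * (D + s) + D') := by
  obtain ⟨r, hr⟩ := id hA
  let absorbed : Set α := {x ∈ A | ∃ x' ∈ A, r x x' ∧ ∃ y ∈ B, dist x' y ≤ s}
  have hnear : ∀ x ∈ absorbed ∪ B, ∃ y ∈ B, dist x y ≤ D + s := by
    rintro x (⟨hx, x', hx', hxx', y, hy, hxy⟩ | hx)
    · exact ⟨y, hy, (dist_triangle x x' y).trans (add_le_add ((hr x hx x' hx').2 hxx') hxy)⟩
    · exact ⟨x, hx, by rw [dist_self]; positivity⟩
  choose! near hnear_mem hnear_dist using hnear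
  have habsorbed : HasSeparatedPieces (absorbed ∪ B) s (2 * (D + s) + D') := by
    refine hB.of_mapsTo hnear_mem (fun x hx y hy hxy => ?_) (fun x hx y hy hxy => ?_)
    · linarith [dist_triangle4_left x y (near x) (near y), hnear_dist x hx, hnear_dist y hy]
    · linarith [dist_triangle4_right x y (near x) (near y), hnear_dist x hx, hnear_dist y hy]
  have hfar : HasSeparatedPieces (A \ (absorbed ∪ B)) s (2 * (D + s) + D') :=
    hA.mono sdiff_subset (by linarith)
  refine (hfar.union_of_separated habsorbed ?_).mono ?_ le_rfl
  swap
  · grind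
  rintro x ⟨hx, hx'⟩ y hy
  contrapose! hx'
  rcases hy with ⟨hy, z, hz, hyz, hzB⟩ | hy
  · exact .inl ⟨hx, z, hz, r.trans ((hr x hx y hy).1 hx') hyz, hzB⟩
  · exact .inl ⟨hx, x, hx, r.refl x, y, hy, hx'⟩

end SeparatedPieces

section SeparatedCover

variable {α β : Type*} [PseudoMetricSpace α] [PseudoMetricSpace β]

/-- `X` is covered by `n + 1` sets, each a disjoint union of pieces of diameter at most `D` that are
more than `s` apart. -/
def HasSeparatedCover (n : ℕ) (X : Set α) (s D : ℝ) : Prop :=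
  ∃ A : Fin (n + 1) → Set α, X ⊆ ⋃ k, A k ∧ ∀ k, HasSeparatedPieces (A k) s D

lemma HasSeparatedCover.mono {n : ℕ} {X Y : Set α} {s D D' : ℝ} (h : HasSeparatedCover n Y s D)
    (hXY : X ⊆ Y) (hD : D ≤ D') : HasSeparatedCover n X s D' := by
  obtain ⟨A, hYA, hA⟩ := h
  exact ⟨A, hXY.trans hYA, fun k => (hA k).mono Subset.rfl hD⟩

lemma hasSeparatedCover_of_isBoundedBy (n : ℕ) {X : Set α} {D : ℝ} (h : IsBoundedBy dist X D)
    (s : ℝ) : HasSeparatedCover n X s D :=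
  ⟨fun _ => X, subset_iUnion (fun _ : Fin (n + 1) => X) 0,
    fun _ => hasSeparatedPieces_of_isBoundedBy h s⟩

lemma HasSeparatedCover.of_mapsTo {n : ℕ} {X : Set α} {Y : Set β} {s D s' D' : ℝ}
    (h : HasSeparatedCover n X s D) {φ : β → α} (hφ : MapsTo φ Y X)
    (hs : ∀ x ∈ Y, ∀ y ∈ Y, dist x y ≤ s' → dist (φ x) (φ y) ≤ s)
    (hD : ∀ x ∈ Y, ∀ y ∈ Y, dist (φ x) (φ y) ≤ D → dist x y ≤ D') :
    HasSeparatedCover n Y s' D' := by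
  obtain ⟨A, hXA, hA⟩ := h
  refine ⟨fun k => Y ∩ φ ⁻¹' A k, ?_, fun k => (hA k).of_mapsTo (fun x hx => hx.2)
    (fun x hx y hy => hs x hx.1 y hy.1) (fun x hx y hy => hD x hx.1 y hy.1)⟩
  rw [← inter_iUnion, ← preimage_iUnion]
  exact subset_inter Subset.rfl fun x hx => hXA (hφ hx)

lemma HasSeparatedCover.image {ι : Type*} {n : ℕ} {g : ι → α} {g' : ι → β} {X : Set ι}
    {s D s' D' : ℝ} (h : HasSeparatedCover n (g '' X) s D)
    (hs : ∀ x ∈ X, ∀ y ∈ X, dist (g' x) (g' y) ≤ s' → dist (g x) (g y) ≤ s)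
    (hD : ∀ x ∈ X, ∀ y ∈ X, dist (g x) (g y) ≤ D → dist (g' x) (g' y) ≤ D') :
    HasSeparatedCover n (g' '' X) s' D' := by
  rcases X.eq_empty_or_nonempty with rfl | ⟨x₀, -⟩
  · exact hasSeparatedCover_of_isBoundedBy n (by simp [IsBoundedBy]) s'
  have : Nonempty ι := ⟨x₀⟩
  choose! preim hmem heq using fun y (hy : y ∈ g' '' X) => hy
  refine h.of_mapsTo (φ := g ∘ preim) (fun y hy => mem_image_of_mem g (hmem y hy)) ?_ ?_
  · intro x hx y hy hxy
    exact hs _ (hmem x hx) _ (hmem y hy) (by rwa [heq x hx, heq y hy])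
  · intro x hx y hy hxy
    simpa only [heq x hx, heq y hy] using hD _ (hmem x hx) _ (hmem y hy) hxy

lemma HasSeparatedCover.union {n : ℕ} {X Y : Set α} {s D D' : ℝ} (hs : 0 ≤ s) (hD : 0 ≤ D)
    (hD' : 0 ≤ D') (hX : HasSeparatedCover n X s D)
    (hY : HasSeparatedCover n Y (2 * D + 3 * s) D') :
    HasSeparatedCover n (X ∪ Y) s (2 * (D + s) + D') := by
  obtain ⟨A, hXA, hA⟩ := hX
  obtain ⟨B, hYB, hB⟩ := hY
  refine ⟨fun k => A k ∪ B k, ?_, fun k => (hA k).union hs hD hD' (hB k)⟩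
  rw [iUnion_union_distrib]
  exact union_subset_union hXA hYB

lemma HasSeparatedCover.iUnion {ι : Type*} {n : ℕ} {X : ι → Set α} {s D : ℝ}
    (h : ∀ i, HasSeparatedCover n (X i) s D)
    (hsep : ∀ i j, ∀ x ∈ X i, ∀ y ∈ X j, dist x y ≤ s → i = j) :
    HasSeparatedCover n (⋃ i, X i) s D := by
  choose A hXA hA using h
  refine ⟨fun k => ⋃ i, X i ∩ A i k, ?_, fun k => .iUnion (fun i => ?_) ?_⟩
  · rw [iUnion_comm]
    simp_rw [← inter_iUnion]
    exact iUnion_mono fun i => subset_inter Subset.rfl (hXA i)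
  · exact (hA i k).mono inter_subset_right le_rfl
  · exact fun i j x hx y hy => hsep i j x hx.1 y hy.1

end SeparatedCover

section Multiplicity

variable {α : Type*} [PseudoMetricSpace α]

/-- `X` has a covering by subsets of diameter at most `D` with `s`-multiplicity at most `n + 1`, as
in the definition of the Nagata dimension. -/
def HasLowMultiplicityCover (n : ℕ) (X : Set α) (s D : ℝ) : Prop :=
  ∃ B : Set (Set α), (∀ b ∈ B, b ⊆ X) ∧ X ⊆ ⋃₀ B ∧ (∀ b ∈ B, IsBoundedBy dist b D) ∧
    ∀ T ⊆ X, IsBoundedBy dist T s → {b ∈ B | (T ∩ b).Nonempty}.encard ≤ (n : ℕ∞) + 1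

lemma HasLowMultiplicityCover.mono_dim {m n : ℕ} {X : Set α} {s D : ℝ}
    (h : HasLowMultiplicityCover m X s D) (hmn : m ≤ n) : HasLowMultiplicityCover n X s D := by
  obtain ⟨B, hBX, hXB, hBD, hB⟩ := h
  exact ⟨B, hBX, hXB, hBD, fun T hT hTs => (hB T hT hTs).trans (by gcongr)⟩

lemma HasSeparatedCover.hasLowMultiplicityCover {n : ℕ} {X : Set α} {s D : ℝ}
    (h : HasSeparatedCover n X s D) : HasLowMultiplicityCover n X s D := by
  obtain ⟨A, hXA, hA⟩ := h
  choose r hr using hA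
  let piece (k : Fin (n + 1)) (x : α) : Set α := {y ∈ X ∩ A k | r k x y}
  refine ⟨{b | ∃ k, ∃ x ∈ X ∩ A k, b = piece k x}, ?_, fun x hx => ?_, ?_, fun T _ hT => ?_⟩
  · rintro _ ⟨k, x, -, rfl⟩ y hy
    exact hy.1.1
  · obtain ⟨k, hk⟩ := mem_iUnion.1 (hXA hx)
    exact ⟨piece k x, ⟨k, x, ⟨hx, hk⟩, rfl⟩, ⟨hx, hk⟩, (r k).refl x⟩
  · rintro _ ⟨k, x, -, rfl⟩ y ⟨hy, hxy⟩ z ⟨hz, hxz⟩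
    exact (hr k y hy.2 z hz.2).2 ((r k).trans ((r k).symm hxy) hxz)
  · let pieceMeeting (k : Fin (n + 1)) : Set α := {y ∈ X ∩ A k | ∃ t ∈ T ∩ A k, r k t y}
    have hsub : {b ∈ {b | ∃ k, ∃ x ∈ X ∩ A k, b = piece k x} | (T ∩ b).Nonempty} ⊆
        pieceMeeting '' univ := by
      rintro _ ⟨⟨k, x, -, rfl⟩, t, htT, ht, hxt⟩
      refine ⟨k, trivial, ?_⟩
      ext y
      refine and_congr_right fun _ =>
        ⟨?_, fun hxy => ⟨t, ⟨htT, ht.2⟩, (r k).trans ((r k).symm hxt) hxy⟩⟩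
      rintro ⟨t', ht', hty⟩
      have htt' : r k t t' := (hr k t ht.2 t' ht'.2).1 (hT t htT t' ht'.1)
      exact (r k).trans hxt ((r k).trans htt' hty)
    calc _ ≤ (pieceMeeting '' univ).encard := encard_le_encard hsub
      _ ≤ (univ : Set (Fin (n + 1))).encard := encard_image_le _ _
      _ = n + 1 := by simp

lemma exists_eq_succ_of_encard_le {γ : Type*} {A : ℕ → Set γ} {n : ℕ} (hA : Monotone A)
    (h0 : (A 0).Nonempty) (hn : (A (n + 1)).encard ≤ (n : ℕ∞) + 1) :
    ∃ j : Fin (n + 1), A j = A (j + 1) := by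
  by_contra! hne
  have hgrow : ∀ j ≤ n + 1, (j : ℕ∞) + 1 ≤ (A j).encard := by
    intro j hj
    induction j with
    | zero => simpa using one_le_encard_iff_nonempty.2 h0
    | succ j ih =>
      have hfin : (A (j + 1)).Finite :=
        (finite_of_encard_le_coe (k := n + 1) (mod_cast hn)).subset (hA hj)
      have hss : A j ⊂ A (j + 1) := (hA j.le_succ).ssubset_of_ne (hne ⟨j, hj⟩)
      calc ((j + 1 : ℕ) : ℕ∞) + 1 ≤ (A j).encard + 1 := by
            push_cast; gcongr; exact ih (by omega)
        _ ≤ (A (j + 1)).encard :=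
          Order.add_one_le_of_lt ((hfin.subset hss.subset).encard_lt_encard hss)
  have : n + 1 + 1 ≤ n + 1 := by exact_mod_cast (hgrow (n + 1) le_rfl).trans hn
  omega

lemma hasSeparatedPieces_setOf_eq {γ : Type*} {X : Set α} {s D : ℝ} {f g : α → Set γ}
    (hfg : ∀ x ∈ X, ∀ y ∈ X, dist x y ≤ s → f x ⊆ g y)
    (hD : ∀ x ∈ X, ∀ y ∈ X, f x = f y → dist x y ≤ D) :
    HasSeparatedPieces {x ∈ X | f x = g x} s D := by
  refine ⟨Setoid.ker f, fun x hx y hy => ⟨fun hxy => Subset.antisymm ?_ ?_, hD x hx.1 y hy.1⟩⟩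
  · exact hy.2 ▸ hfg x hx.1 y hy.1 hxy
  · exact hx.2 ▸ hfg y hy.1 x hx.1 (dist_comm x y ▸ hxy)

/-- The members of the cover meeting the ball of radius `(j + 1) * s` around `x` cannot increase at
each of the `n + 1` steps from `j = 0` to `j = n + 1`. Where they do not increase at step `j`, they
are constant under displacements of length at most `s`, so they label the pieces of colour `j`. -/
lemma HasLowMultiplicityCover.hasSeparatedCover {n : ℕ} {X : Set α} {s D : ℝ} (hs : 0 < s)
    (h : HasLowMultiplicityCover n X (2 * (n + 2) * s) D) :
    HasSeparatedCover n X s (D + 2 * (n + 1) * s) := by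
  obtain ⟨B, -, hXB, hBD, hB⟩ := h
  let near (j : ℕ) (x : α) : Set (Set α) := {b ∈ B | (X ∩ ball x ((j + 1) * s) ∩ b).Nonempty}
  have near_mono (x : α) : Monotone (near · x) := by
    rintro i j hij b ⟨hb, hmeet⟩
    exact ⟨hb, hmeet.mono (by gcongr)⟩
  have near_nonempty (j : ℕ) {x : α} (hx : x ∈ X) : (near j x).Nonempty := by
    obtain ⟨b, hb, hxb⟩ := hXB hx
    exact ⟨b, hb, x, ⟨hx, mem_ball_self (by positivity)⟩, hxb⟩
  have encard_near_le (x : α) : (near (n + 1) x).encard ≤ (n : ℕ∞) + 1 := by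
    refine hB _ inter_subset_left fun y hy z hz => ?_
    have hxy := mem_ball.1 hy.2
    have hxz := mem_ball.1 hz.2
    push_cast at hxy hxz
    linarith [dist_triangle_right y z x]
  have near_shift (j : ℕ) {x y : α} (hxy : dist x y ≤ s) : near j x ⊆ near (j + 1) y := by
    rintro b ⟨hb, z, ⟨hzX, hz⟩, hzb⟩
    refine ⟨hb, z, ⟨hzX, mem_ball.2 ?_⟩, hzb⟩
    rw [mem_ball] at hz
    push_cast
    linarith [dist_triangle z x y]
  refine ⟨fun j => {x ∈ X | near j x = near (j + 1) x}, fun x hx => ?_,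
    fun j => hasSeparatedPieces_setOf_eq (fun x _ y _ => near_shift j) fun x hx y _ hxy => ?_⟩
  · obtain ⟨j, hj⟩ := exists_eq_succ_of_encard_le (near_mono x) (near_nonempty 0 hx)
      (encard_near_le x)
    exact mem_iUnion.2 ⟨j, hx, hj⟩
  · obtain ⟨b, hb⟩ := near_nonempty j hx
    obtain ⟨-, v, ⟨-, hv⟩, hvb⟩ : b ∈ near j y := hxy ▸ hb
    obtain ⟨hbB, u, ⟨-, hu⟩, hub⟩ := hb
    have hjs : ((j : ℝ) + 1) * s ≤ (n + 1) * s := by gcongr; exact j.is_le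
    rw [mem_ball'] at hu
    rw [mem_ball] at hv
    linarith [dist_triangle4 x u v y, hBD b hbB u hub v hvb]

end Multiplicity

section NagataDim

variable {α : Type*} [PseudoMetricSpace α]

/-- The Nagata dimension of `X` is at most `n`, with constant `c`: a separated form of the covering
condition, in which the pieces at scale `s` have diameter at most `c * s`. -/
def NagataDimLEWith (n : ℕ) (c : ℝ) (X : Set α) : Prop :=
  ∀ s : ℝ, 0 < s → HasSeparatedCover n X s (c * s)

lemma NagataDimLEWith.mono {n : ℕ} {c c' : ℝ} {X Y : Set α} (h : NagataDimLEWith n c Y)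
    (hXY : X ⊆ Y) (hc : c ≤ c') : NagataDimLEWith n c' X :=
  fun s hs => (h s hs).mono hXY (by gcongr)

lemma NagataDimLEWith.union {n : ℕ} {c c' : ℝ} {X Y : Set α} (hc : 0 ≤ c) (hc' : 0 ≤ c')
    (hX : NagataDimLEWith n c X) (hY : NagataDimLEWith n c' Y) :
    NagataDimLEWith n (2 * (c + 1) + c' * (2 * c + 3)) (X ∪ Y) := by
  intro s hs
  have hY' : HasSeparatedCover n Y (2 * (c * s) + 3 * s) (c' * (2 * (c * s) + 3 * s)) :=
    hY _ (by positivity)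
  exact ((hX s hs).union hs.le (by positivity) (by positivity) hY').mono Subset.rfl
    (le_of_eq (by ring))

lemma exists_nagataDimLEWith_iff {n : ℕ} {X : Set α} :
    (∃ c > 0, NagataDimLEWith n c X) ↔
      ∃ c > 0, ∀ s : ℝ, 0 < s → HasLowMultiplicityCover n X s (c * s) := by
  constructor
  · rintro ⟨c, hc, h⟩
    exact ⟨c, hc, fun s hs => (h s hs).hasLowMultiplicityCover⟩
  · rintro ⟨c, hc, h⟩
    refine ⟨c * (2 * (n + 2)) + 2 * (n + 1), by positivity, fun s hs => ?_⟩
    exact ((h (2 * (n + 2) * s) (by positivity)).hasSeparatedCover hs).mono Subset.rfl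
      (le_of_eq (by ring))

theorem nagataDim_le_iff {n : ℕ} {X : Set α} :
    nagataDim X ≤ n ↔ ∃ c > 0, NagataDimLEWith n c X := by
  rw [exists_nagataDimLEWith_iff]
  constructor
  · intro h
    have hne : nagataDim X ∈ {N : ℕ∞ | ∃ m : ℕ, N = m ∧ ∃ c > 0, ∀ s : ℝ, 0 < s →
        HasLowMultiplicityCover m X s (c * s)} := by
      refine csInf_mem (nonempty_iff_ne_empty.2 fun hempty => ?_)
      have : nagataDim X = ⊤ := (congrArg sInf hempty).trans sInf_empty
      simp [this] at h
    obtain ⟨m, hm, c, hc, hcover⟩ := hne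
    rw [hm, Nat.cast_le] at h
    exact ⟨c, hc, fun s hs => (hcover s hs).mono_dim h⟩
  · rintro ⟨c, hc, h⟩
    exact sInf_le ⟨n, rfl, c, hc, h⟩

lemma nagataDim_mono {X Y : Set α} (h : X ⊆ Y) : nagataDim X ≤ nagataDim Y := by
  refine WithTop.forall_le_coe_iff_le.1 fun n hn => ?_
  obtain ⟨c, hc, hY⟩ := nagataDim_le_iff.1 hn
  exact nagataDim_le_iff.2 ⟨c, hc, hY.mono h le_rfl⟩

theorem nagataDim_union (X Y : Set α) : nagataDim (X ∪ Y) = max (nagataDim X) (nagataDim Y) := by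
  refine le_antisymm (WithTop.forall_le_coe_iff_le.1 fun n hn => ?_)
    (max_le (nagataDim_mono subset_union_left) (nagataDim_mono subset_union_right))
  obtain ⟨c, hc, hX⟩ := nagataDim_le_iff.1 ((le_max_left _ _).trans hn)
  obtain ⟨c', hc', hY⟩ := nagataDim_le_iff.1 ((le_max_right _ _).trans hn)
  exact nagataDim_le_iff.2 ⟨_, by positivity, hX.union hc.le hc'.le hY⟩

lemma nagataDim_eq_zero_of_subsingleton {X : Set α} (hX : X.Subsingleton) : nagataDim X = 0 := by
  refine nonpos_iff_eq_zero.1 (nagataDim_le_iff (n := 0).2 ⟨1, one_pos, fun s hs => ?_⟩)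
  refine hasSeparatedCover_of_isBoundedBy 0 (fun x hx y hy => ?_) s
  rw [hX hx hy, dist_self]
  positivity

end NagataDim

section PowerDistortion

variable {α β γ : Type*}

lemma NagataDimLEWith.iUnion_of_levels [PseudoMetricSpace α] {Y : ℤ → Set α} {n : ℕ} {c a C q : ℝ}
    (hc : 0 ≤ c) (ha : 0 < a) (hC : 0 ≤ C) (hq : 1 < q) (hY : ∀ m, NagataDimLEWith n c (Y m))
    (hle : ∀ i j, i ≤ j → ∀ x ∈ Y i, ∀ y ∈ Y j, dist x y ≤ C * q ^ j)
    (hge : ∀ i j, i < j → ∀ x ∈ Y i, ∀ y ∈ Y j, a * q ^ j ≤ dist x y) :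
    NagataDimLEWith n (c + C / a) (⋃ m, Y m) := by
  intro s hs
  obtain ⟨M, hMs, hsM⟩ := exists_mem_Ico_zpow (x := s / a) (by positivity) hq
  rw [le_div_iff₀' ha] at hMs
  rw [div_lt_iff₀' ha] at hsM
  have hCM : C * q ^ M ≤ C / a * s :=
    calc C * q ^ M = C / a * (a * q ^ M) := by field_simp
      _ ≤ C / a * s := by gcongr
  -- All levels below the scale `s` are merged into one.
  let Z (i : ℤ) : Set α := {x | ∃ m, max m M = i ∧ x ∈ Y m}
  have hYZ : ⋃ m, Y m ⊆ ⋃ i, Z i :=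
    iUnion_subset fun m x hx => mem_iUnion.2 ⟨max m M, m, rfl, hx⟩
  refine (HasSeparatedCover.iUnion (fun i => ?_) fun i j => ?_).mono hYZ le_rfl
  · rcases le_or_gt i M with hi | hi
    · refine (hasSeparatedCover_of_isBoundedBy n (D := C * q ^ M) ?_ s).mono Subset.rfl ?_
      · have hbound : ∀ m m', m ≤ m' → m' ≤ M → ∀ x ∈ Y m, ∀ y ∈ Y m', dist x y ≤ C * q ^ M :=
          fun m m' hm hm' x hx y hy => (hle m m' hm x hx y hy).trans (by gcongr; exact hq.le)
        rintro x ⟨m, hm, hx⟩ y ⟨m', hm', hy⟩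
        rcases le_total m m' with hmm' | hmm'
        · exact hbound m m' hmm' (by omega) x hx y hy
        · exact dist_comm x y ▸ hbound m' m hmm' (by omega) y hy x hx
      · linarith [mul_nonneg hc hs.le]
    · refine (hY i s hs).mono ?_ ?_
      · rintro x ⟨m, hm, hx⟩
        obtain rfl : m = i := by omega
        exact hx
      · gcongr
        exact le_add_of_nonneg_right (by positivity)
  · have hfar : ∀ i j, i < j → ∀ x ∈ Z i, ∀ y ∈ Z j, s < dist x y := by
      rintro i j hij x ⟨m, hm, hx⟩ y ⟨m', hm', hy⟩
      calc s < a * q ^ (M + 1) := hsM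
        _ ≤ a * q ^ m' := by gcongr; exacts [hq.le, by omega]
        _ ≤ dist x y := hge m m' (by omega) x hx y hy
    intro x hx y hy hxy
    rcases lt_trichotomy i j with hij | rfl | hij
    · exact absurd hxy (hfar i j hij x hx y hy).not_ge
    · rfl
    · exact absurd hxy (dist_comm x y ▸ hfar j i hij y hy x hx).not_ge

lemma NagataDimLEWith.image_of_dist_comparable [PseudoMetricSpace α] [PseudoMetricSpace β]
    {g : γ → α} {g' : γ → β} {X : Set γ} {n : ℕ} {c t K : ℝ} (ht : 0 < t) (hK : 0 < K)
    (h : NagataDimLEWith n c (g '' X))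
    (hle : ∀ x ∈ X, ∀ y ∈ X, dist (g' x) (g' y) ≤ t * dist (g x) (g y))
    (hge : ∀ x ∈ X, ∀ y ∈ X, t * dist (g x) (g y) ≤ K * dist (g' x) (g' y)) :
    NagataDimLEWith n (K * c) (g' '' X) := by
  intro s hs
  refine (h (K * s / t) (by positivity)).image (fun x hx y hy hxy => ?_) fun x hx y hy hxy => ?_
  · rw [le_div_iff₀' ht]
    exact (hge x hx y hy).trans (by gcongr)
  · calc dist (g' x) (g' y) ≤ t * dist (g x) (g y) := hle x hx y hy
      _ ≤ t * (c * (K * s / t)) := by gcongr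
      _ = K * c * s := by field_simp

/-- Up to the factors `a` and `b`, the map `g` stretches the distance of two points of `X` by the
`k`-th power of the larger of their distances to `c`, as `z ↦ (z - c) ^ (k + 1)` does in a narrow
sector with vertex `c`. -/
structure HasPowerDistortion [PseudoMetricSpace α] [PseudoMetricSpace β] (a b : ℝ) (g : α → β)
    (c : α) (k : ℕ) (X : Set α) : Prop where
  lower_pos : 0 < a
  upper_pos : 0 < b
  lower : ∀ x ∈ X, ∀ y ∈ X, a * (dist x y * max (dist x c) (dist y c) ^ k) ≤ dist (g x) (g y)
  upper : ∀ x ∈ X, ∀ y ∈ X, dist (g x) (g y) ≤ b * (dist x y * max (dist x c) (dist y c) ^ k)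

/-- The closed annulus around `c` with radii `P` and `2 * P`. -/
def annulus [PseudoMetricSpace α] (c : α) (P : ℝ) : Set α := {x | dist x c ∈ Icc P (2 * P)}

lemma mem_iUnion_annulus_or [MetricSpace α] {c x : α} (hx : x ≠ c) :
    (x ∈ ⋃ j : ℤ, annulus c (1 * 4 ^ j)) ∨ x ∈ ⋃ j : ℤ, annulus c (2 * 4 ^ j) := by
  obtain ⟨j, hj, hj'⟩ := exists_mem_Ico_zpow (dist_pos.2 hx) (y := 4) (by norm_num)
  rw [zpow_add_one₀ (by norm_num)] at hj'
  rcases le_total (dist x c) (2 * 4 ^ j) with h | h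
  · exact .inl (mem_iUnion.2 ⟨j, by linarith, by linarith⟩)
  · exact .inr (mem_iUnion.2 ⟨j, by linarith, by linarith⟩)

section Pseudo

variable [PseudoMetricSpace α] [PseudoMetricSpace β] [PseudoMetricSpace γ]
variable {a b a' b' : ℝ} {g : α → β} {g' : α → γ} {c : α} {k k' : ℕ} {X Y : Set α}

lemma HasPowerDistortion.mono (h : HasPowerDistortion a b g c k Y) (hXY : X ⊆ Y) :
    HasPowerDistortion a b g c k X :=
  ⟨h.lower_pos, h.upper_pos, fun x hx y hy => h.lower x (hXY hx) y (hXY hy),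
    fun x hx y hy => h.upper x (hXY hx) y (hXY hy)⟩

lemma hasPowerDistortion_id (c : α) (X : Set α) : HasPowerDistortion 1 1 id c 0 X :=
  ⟨one_pos, one_pos, by simp, by simp⟩

lemma HasPowerDistortion.nagataDimLEWith_image_annulus {n : ℕ} {e P : ℝ} (hP : 0 < P)
    (hg : HasPowerDistortion a b g c k X) (hg' : HasPowerDistortion a' b' g' c k' X)
    (hX : X ⊆ annulus c P) (h : NagataDimLEWith n e (g '' X)) :
    NagataDimLEWith n (b * b' * 2 ^ k * 2 ^ k' / (a * a') * e) (g' '' X) := by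
  have ha := hg.lower_pos
  have hb := hg.upper_pos
  have ha' := hg'.lower_pos
  have hb' := hg'.upper_pos
  have hmax_ge (x : α) (hx : x ∈ X) (y : α) : P ≤ max (dist x c) (dist y c) :=
    le_max_of_le_left (hX hx).1
  have hmax_le (x : α) (hx : x ∈ X) (y : α) (hy : y ∈ X) : max (dist x c) (dist y c) ≤ 2 * P :=
    max_le (hX hx).2 (hX hy).2
  refine h.image_of_dist_comparable (t := b' * (2 * P) ^ k' / (a * P ^ k)) (by positivity)
    (by positivity) (fun x hx y hy => ?_) fun x hx y hy => ?_
  · calc dist (g' x) (g' y) ≤ b' * (dist x y * (2 * P) ^ k') :=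
          (hg'.upper x hx y hy).trans (by gcongr; exact hmax_le x hx y hy)
      _ = b' * (2 * P) ^ k' / (a * P ^ k) * (a * (dist x y * P ^ k)) := by field_simp
      _ ≤ b' * (2 * P) ^ k' / (a * P ^ k) * dist (g x) (g y) := by
          gcongr
          exact le_trans (by gcongr; exact hmax_ge x hx y) (hg.lower x hx y hy)
  · calc b' * (2 * P) ^ k' / (a * P ^ k) * dist (g x) (g y)
          ≤ b' * (2 * P) ^ k' / (a * P ^ k) * (b * (dist x y * (2 * P) ^ k)) := by
          gcongr
          exact (hg.upper x hx y hy).trans (by gcongr; exact hmax_le x hx y hy)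
      _ = b * b' * 2 ^ k * 2 ^ k' / (a * a') * (a' * (dist x y * P ^ k')) := by
          rw [mul_pow, mul_pow]; field_simp
      _ ≤ b * b' * 2 ^ k * 2 ^ k' / (a * a') * dist (g' x) (g' y) := by
          gcongr
          exact le_trans (by gcongr; exact hmax_ge x hx y) (hg'.lower x hx y hy)

lemma HasPowerDistortion.nagataDimLEWith_image_iUnion_annulus {n : ℕ} {e r : ℝ} (he : 0 ≤ e)
    (hr : 0 < r) (hg : HasPowerDistortion a b g c k X)
    (hX : X ⊆ ⋃ j : ℤ, annulus c (r * 4 ^ j))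
    (h : ∀ j : ℤ, NagataDimLEWith n e (g '' (X ∩ annulus c (r * 4 ^ j)))) :
    NagataDimLEWith n (e + b * (4 * r * (2 * r) ^ k) / (a * (r / 2 * r ^ k))) (g '' X) := by
  have ha := hg.lower_pos
  have hb := hg.upper_pos
  have hpow (j : ℤ) : ((4 : ℝ) ^ (k + 1)) ^ j = 4 ^ j * (4 ^ j) ^ k := by
    rw [← pow_succ', ← zpow_natCast, ← zpow_natCast, zpow_comm]
  have hlevels : g '' X = ⋃ j : ℤ, g '' (X ∩ annulus c (r * 4 ^ j)) := by
    rw [← image_iUnion, ← inter_iUnion, inter_eq_left.2 hX]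
  rw [hlevels]
  refine NagataDimLEWith.iUnion_of_levels he (by positivity) (by positivity)
    (one_lt_pow₀ (by norm_num : (1 : ℝ) < 4) k.succ_ne_zero) h ?_ ?_
  · rintro i j hij _ ⟨x, ⟨hx, -, hxi⟩, rfl⟩ _ ⟨y, ⟨hy, -, hyj⟩, rfl⟩
    have hxj : dist x c ≤ 2 * (r * 4 ^ j) := hxi.trans (by gcongr; norm_num)
    have hxy : dist x y ≤ 4 * r * 4 ^ j := by linarith [dist_triangle_right x y c]
    calc dist (g x) (g y) ≤ b * (dist x y * max (dist x c) (dist y c) ^ k) := hg.upper x hx y hy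
      _ ≤ b * (4 * r * 4 ^ j * (2 * (r * 4 ^ j)) ^ k) := by gcongr; exact max_le hxj hyj
      _ = b * (4 * r * (2 * r) ^ k) * (4 ^ (k + 1)) ^ j := by rw [hpow]; ring
  · rintro i j hij _ ⟨x, ⟨hx, -, hxi⟩, rfl⟩ _ ⟨y, ⟨hy, hyj, -⟩, rfl⟩
    have h4 : (4 : ℝ) * 4 ^ i ≤ 4 ^ j := by
      rw [← zpow_one_add₀ (by norm_num)]
      gcongr
      exacts [by norm_num, by omega]
    have hxy : r / 2 * 4 ^ j ≤ dist x y := by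
      linarith [dist_triangle_left y c x, mul_le_mul_of_nonneg_left h4 hr.le]
    calc a * (r / 2 * r ^ k) * (4 ^ (k + 1)) ^ j = a * (r / 2 * 4 ^ j * (r * 4 ^ j) ^ k) := by
          rw [hpow]; ring
      _ ≤ a * (dist x y * max (dist x c) (dist y c) ^ k) := by
          gcongr; exact le_max_of_le_right hyj
      _ ≤ dist (g x) (g y) := hg.lower x hx y hy

end Pseudo

variable [MetricSpace α] [PseudoMetricSpace β] [PseudoMetricSpace γ]
variable {a b a' b' : ℝ} {g : α → β} {g' : α → γ} {c : α} {k k' : ℕ} {X : Set α}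

lemma HasPowerDistortion.nagataDim_image_le (hg : HasPowerDistortion a b g c k X)
    (hg' : HasPowerDistortion a' b' g' c k' X) (hc : c ∉ X) :
    nagataDim (g' '' X) ≤ nagataDim (g '' X) := by
  refine WithTop.forall_le_coe_iff_le.1 fun n hn => ?_
  obtain ⟨e, he, h⟩ := nagataDim_le_iff.1 hn
  have ha := hg.lower_pos
  have hb := hg.upper_pos
  have ha' := hg'.lower_pos
  have hb' := hg'.upper_pos
  have hannuli (r : ℝ) (hr : 0 < r) :
      nagataDim (g' '' (X ∩ ⋃ j : ℤ, annulus c (r * 4 ^ j))) ≤ n := by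
    have hK : 0 < b * b' * 2 ^ k * 2 ^ k' / (a * a') * e := by positivity
    refine nagataDim_le_iff.2 ⟨_, ?_, (hg'.mono inter_subset_left)
      |>.nagataDimLEWith_image_iUnion_annulus hK.le hr inter_subset_right fun j => ?_⟩
    · positivity
    · have hsub : X ∩ (⋃ j : ℤ, annulus c (r * 4 ^ j)) ∩ annulus c (r * 4 ^ j) ⊆ X :=
        inter_subset_left.trans inter_subset_left
      exact (hg.mono hsub).nagataDimLEWith_image_annulus (by positivity) (hg'.mono hsub)
        inter_subset_right (h.mono (image_mono hsub) le_rfl)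
  have hcover : X = (X ∩ ⋃ j : ℤ, annulus c (1 * 4 ^ j)) ∪
      (X ∩ ⋃ j : ℤ, annulus c (2 * 4 ^ j)) := by
    rw [← inter_union_distrib_left, left_eq_inter]
    exact fun x hx => mem_iUnion_annulus_or (ne_of_mem_of_not_mem hx hc)
  rw [hcover, image_union, nagataDim_union]
  exact max_le (hannuli 1 one_pos) (hannuli 2 two_pos)

theorem HasPowerDistortion.nagataDim_image (hg : HasPowerDistortion a b g c k X) (hc : c ∉ X) :
    nagataDim (g '' X) = nagataDim X := by
  have hid := hasPowerDistortion_id c X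
  apply le_antisymm
  · simpa only [image_id] using hid.nagataDim_image_le hg hc
  · simpa only [image_id] using hg.nagataDim_image_le hid hc

end PowerDistortion

section PreservesNagataDimOn

variable {α β γ : Type*} [PseudoMetricSpace α] [PseudoMetricSpace β] [PseudoMetricSpace γ]

/-- `f` maps every subset of `S` onto a set of the same Nagata dimension. -/
def PreservesNagataDimOn (f : α → β) (S : Set α) : Prop :=
  ∀ X ⊆ S, nagataDim (f '' X) = nagataDim X

variable {f : α → β} {S T : Set α}

lemma PreservesNagataDimOn.mono (h : PreservesNagataDimOn f T) (hST : S ⊆ T) :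
    PreservesNagataDimOn f S :=
  fun X hX => h X (hX.trans hST)

lemma PreservesNagataDimOn.union (hS : PreservesNagataDimOn f S) (hT : PreservesNagataDimOn f T) :
    PreservesNagataDimOn f (S ∪ T) := by
  intro X hX
  have hsplit : X = X ∩ S ∪ X ∩ T := by
    rw [← inter_union_distrib_left, inter_eq_left.2 hX]
  rw [hsplit, image_union, nagataDim_union, nagataDim_union, hS _ inter_subset_right,
    hT _ inter_subset_right]

lemma preservesNagataDimOn_of_subsingleton (f : α → β) (hS : S.Subsingleton) :
    PreservesNagataDimOn f S := fun X hX => by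
  rw [nagataDim_eq_zero_of_subsingleton (hS.anti hX),
    nagataDim_eq_zero_of_subsingleton ((hS.anti hX).image f)]

lemma preservesNagataDimOn_of_isCompact {ι : Type*} [TopologicalSpace ι] {K : Set ι}
    (hK : IsCompact K) {φ : α → ι} (hφ : MapsTo φ S K)
    (h : ∀ u ∈ K, ∃ V ∈ 𝓝 u, PreservesNagataDimOn f (S ∩ φ ⁻¹' V)) : PreservesNagataDimOn f S := by
  suffices PreservesNagataDimOn f (S ∩ φ ⁻¹' K) from this.mono (subset_inter Subset.rfl hφ)
  refine hK.induction_on (p := fun V => PreservesNagataDimOn f (S ∩ φ ⁻¹' V)) ?_ ?_ ?_ ?_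
  · exact preservesNagataDimOn_of_subsingleton f (by simp)
  · exact fun V W hVW hW => hW.mono (by gcongr)
  · intro V W hV hW
    rw [preimage_union, inter_union_distrib_left]
    exact hV.union hW
  · intro u hu
    obtain ⟨V, hV, hpres⟩ := h u hu
    exact ⟨V, mem_nhdsWithin_of_mem_nhds hV, hpres⟩

lemma nagataDim_image_le_of_dist_eq {ι : Type*} {g : ι → α} {g' : ι → β}
    (h : ∀ x y, dist (g' x) (g' y) = dist (g x) (g y)) (X : Set ι) :
    nagataDim (g' '' X) ≤ nagataDim (g '' X) := by
  refine WithTop.forall_le_coe_iff_le.1 fun n hn => ?_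
  obtain ⟨c, hc, hX⟩ := nagataDim_le_iff.1 hn
  exact nagataDim_le_iff.2 ⟨1 * c, by positivity, hX.image_of_dist_comparable one_pos one_pos
    (fun x _ y _ => by rw [h, one_mul]) fun x _ y _ => by rw [h]⟩

lemma nagataDim_image_of_isometry {e : α → β} (he : Isometry e) (X : Set α) :
    nagataDim (e '' X) = nagataDim X := by
  apply le_antisymm
  · simpa only [image_id] using nagataDim_image_le_of_dist_eq (g := id) he.dist_eq X
  · simpa only [image_id] using
      nagataDim_image_le_of_dist_eq (g' := id) (fun x y => (he.dist_eq x y).symm) X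

lemma PreservesNagataDimOn.comp_isometry (h : PreservesNagataDimOn f S) {e : γ → α}
    (he : Isometry e) : PreservesNagataDimOn (f ∘ e) (e ⁻¹' S) := by
  intro X hX
  rw [image_comp, h _ (image_subset_iff.2 hX), nagataDim_image_of_isometry he]

end PreservesNagataDimOn

section PowerMap

variable {𝕜 : Type*} [RCLike 𝕜]

lemma norm_pow_sub_pow_le {R : Type*} [NormedCommRing R] [NormOneClass R] (z w : R) (m : ℕ) :
    ‖z ^ m - w ^ m‖ ≤ m * (‖z - w‖ * max ‖z‖ ‖w‖ ^ (m - 1)) := by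
  have hterm : ∀ i ∈ Finset.range m, ‖z ^ i * w ^ (m - 1 - i)‖ ≤ max ‖z‖ ‖w‖ ^ (m - 1) := by
    intro i hi
    calc ‖z ^ i * w ^ (m - 1 - i)‖ ≤ ‖z‖ ^ i * ‖w‖ ^ (m - 1 - i) :=
          (norm_mul_le _ _).trans (by gcongr <;> exact norm_pow_le _ _)
      _ ≤ max ‖z‖ ‖w‖ ^ i * max ‖z‖ ‖w‖ ^ (m - 1 - i) := by
          gcongr
          exacts [le_max_left _ _, le_max_right _ _]
      _ = max ‖z‖ ‖w‖ ^ (m - 1) := by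
          rw [← pow_add, Nat.add_sub_cancel' (Nat.le_sub_one_of_lt (Finset.mem_range.1 hi))]
  calc ‖z ^ m - w ^ m‖ = ‖(∑ i ∈ Finset.range m, z ^ i * w ^ (m - 1 - i)) * (z - w)‖ := by
        rw [(Commute.all z w).geom_sum₂_mul]
    _ ≤ ‖∑ i ∈ Finset.range m, z ^ i * w ^ (m - 1 - i)‖ * ‖z - w‖ := norm_mul_le _ _
    _ ≤ (m * max ‖z‖ ‖w‖ ^ (m - 1)) * ‖z - w‖ := by
        gcongr
        simpa using norm_sum_le_of_le _ hterm
    _ = m * (‖z - w‖ * max ‖z‖ ‖w‖ ^ (m - 1)) := by ring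

/-- `z ^ d - w ^ d` is `z - w` times the sum of the `z ^ i * w ^ (d - 1 - i)`, and these have nearly
the same argument when `z` and `w` do, so that they do not cancel. -/
lemma norm_sub_mul_max_pow_le {d : ℕ} (hd : d ≠ 0) {v z w : 𝕜} (hv : ‖v‖ = 1)
    (h : ∀ i ∈ Finset.range d, 1 / 2 ≤
      RCLike.re (v * (NormedSpace.normalize z ^ i * NormedSpace.normalize w ^ (d - 1 - i)))) :
    ‖z - w‖ * max ‖z‖ ‖w‖ ^ (d - 1) ≤ 2 * ‖z ^ d - w ^ d‖ := by
  have hterm : ∀ i ∈ Finset.range d,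
      1 / 2 * (‖z‖ ^ i * ‖w‖ ^ (d - 1 - i)) ≤ RCLike.re (v * (z ^ i * w ^ (d - 1 - i))) := by
    intro i hi
    have hpolar : v * (z ^ i * w ^ (d - 1 - i)) = (‖z‖ ^ i * ‖w‖ ^ (d - 1 - i)) •
        (v * (NormedSpace.normalize z ^ i * NormedSpace.normalize w ^ (d - 1 - i))) := by
      nth_rw 1 [← NormedSpace.norm_smul_normalize z, ← NormedSpace.norm_smul_normalize w]
      rw [smul_pow, smul_pow, smul_mul_smul_comm, mul_smul_comm]
    rw [hpolar, RCLike.smul_re, mul_comm]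
    gcongr
    exact h i hi
  have hmax : 1 / 2 * max ‖z‖ ‖w‖ ^ (d - 1) ≤
      ∑ i ∈ Finset.range d, RCLike.re (v * (z ^ i * w ^ (d - 1 - i))) := by
    have hle (i : ℕ) (hi : i ∈ Finset.range d) : 1 / 2 * (‖z‖ ^ i * ‖w‖ ^ (d - 1 - i)) ≤
        ∑ i ∈ Finset.range d, RCLike.re (v * (z ^ i * w ^ (d - 1 - i))) :=
      (hterm i hi).trans (Finset.single_le_sum
        (fun j hj => le_trans (by positivity) (hterm j hj)) hi)
    rcases max_choice ‖z‖ ‖w‖ with hzw | hzw <;> rw [hzw]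
    · simpa using hle (d - 1) (by simp; omega)
    · simpa using hle 0 (by simp; omega)
  have hsum : 1 / 2 * max ‖z‖ ‖w‖ ^ (d - 1) ≤
      ‖∑ i ∈ Finset.range d, z ^ i * w ^ (d - 1 - i)‖ := by
    rw [← map_sum, ← Finset.mul_sum] at hmax
    simpa [hv] using hmax.trans (RCLike.re_le_norm _)
  calc ‖z - w‖ * max ‖z‖ ‖w‖ ^ (d - 1)
      = 2 * (1 / 2 * max ‖z‖ ‖w‖ ^ (d - 1) * ‖z - w‖) := by ring
    _ ≤ 2 * (‖∑ i ∈ Finset.range d, z ^ i * w ^ (d - 1 - i)‖ * ‖z - w‖) := by gcongr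
    _ = 2 * ‖z ^ d - w ^ d‖ := by rw [← norm_mul, (Commute.all z w).geom_sum₂_mul]

lemma exists_nhds_norm_sub_mul_max_pow_le {d : ℕ} (hd : d ≠ 0) {u : 𝕜} (hu : ‖u‖ = 1) :
    ∃ V ∈ 𝓝 u, ∀ z w : 𝕜, NormedSpace.normalize z ∈ V → NormedSpace.normalize w ∈ V →
      ‖z - w‖ * max ‖z‖ ‖w‖ ^ (d - 1) ≤ 2 * ‖z ^ d - w ^ d‖ := by
  have hev : ∀ᶠ x in 𝓝 u ×ˢ 𝓝 u, ∀ i ∈ Finset.range d,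
      1 / 2 ≤ RCLike.re (conj u ^ (d - 1) * (x.1 ^ i * x.2 ^ (d - 1 - i))) := by
    rw [← nhds_prod_eq, eventually_all_finset]
    intro i hi
    have hcont : Continuous fun x : 𝕜 × 𝕜 =>
        RCLike.re (conj u ^ (d - 1) * (x.1 ^ i * x.2 ^ (d - 1 - i))) := by fun_prop
    refine (hcont.tendsto (u, u)).eventually (le_mem_nhds ?_)
    have hi' : i + (d - 1 - i) = d - 1 := by have := Finset.mem_range.1 hi; omega
    rw [← pow_add, hi', ← mul_pow, RCLike.conj_mul, hu]
    norm_num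
  obtain ⟨V, hV, h⟩ := mem_prod_self_iff.1 hev
  exact ⟨V, hV, fun z w hz hw => norm_sub_mul_max_pow_le hd (by simp [hu]) (h (mk_mem_prod hz hw))⟩

end PowerMap

section Polynomial

open Polynomial Asymptotics

variable {𝕜 : Type*} [RCLike 𝕜]

/-- At radius `t` the monomial of degree `d` of `p` dominates the other ones, where the size of a
monomial is measured by a bound for its derivative. -/
def IsDominantDegree (p : 𝕜[X]) (d : ℕ) (t : ℝ) : Prop :=
  ∑ m ∈ p.support.erase d, m * ‖p.coeff m‖ * t ^ (m - 1) ≤ ‖p.coeff d‖ / 4 * t ^ (d - 1)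

lemma IsDominantDegree.norm_eval_sub_eval_sub_le {p : 𝕜[X]} {d : ℕ} {z w : 𝕜}
    (hz : IsDominantDegree p d ‖z‖) (hw : IsDominantDegree p d ‖w‖) :
    ‖p.eval z - p.eval w - p.coeff d * (z ^ d - w ^ d)‖ ≤
      ‖p.coeff d‖ / 4 * (‖z - w‖ * max ‖z‖ ‖w‖ ^ (d - 1)) := by
  have hmax : IsDominantDegree p d (max ‖z‖ ‖w‖) := by
    rcases max_choice ‖z‖ ‖w‖ with h | h <;> rw [h] <;> assumption
  have hexpand : p.eval z - p.eval w - p.coeff d * (z ^ d - w ^ d) =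
      ∑ m ∈ p.support.erase d, p.coeff m * (z ^ m - w ^ m) := by
    have hsum : ∑ m ∈ p.support, p.coeff m * (z ^ m - w ^ m) = p.eval z - p.eval w := by
      simp only [eval_eq_sum, Polynomial.sum, mul_sub, Finset.sum_sub_distrib]
    by_cases hd : d ∈ p.support
    · rw [← hsum, ← Finset.add_sum_erase _ _ hd, add_sub_cancel_left]
    · rw [Finset.erase_eq_of_notMem hd, hsum, notMem_support_iff.1 hd, zero_mul, sub_zero]
  calc ‖p.eval z - p.eval w - p.coeff d * (z ^ d - w ^ d)‖
      ≤ ∑ m ∈ p.support.erase d, ‖p.coeff m‖ * (m * (‖z - w‖ * max ‖z‖ ‖w‖ ^ (m - 1))) := by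
        rw [hexpand]
        refine norm_sum_le_of_le _ fun m _ => ?_
        rw [norm_mul]
        gcongr
        exact norm_pow_sub_pow_le z w m
    _ = ‖z - w‖ * ∑ m ∈ p.support.erase d, m * ‖p.coeff m‖ * max ‖z‖ ‖w‖ ^ (m - 1) := by
        rw [Finset.mul_sum]
        exact Finset.sum_congr rfl fun m _ => by ring
    _ ≤ ‖z - w‖ * (‖p.coeff d‖ / 4 * max ‖z‖ ‖w‖ ^ (d - 1)) := by gcongr; exact hmax
    _ = ‖p.coeff d‖ / 4 * (‖z - w‖ * max ‖z‖ ‖w‖ ^ (d - 1)) := by ring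

lemma hasPowerDistortion_eval {p : 𝕜[X]} {d : ℕ} (hd : p.coeff d ≠ 0) {S : Set 𝕜}
    (hdom : ∀ z ∈ S, IsDominantDegree p d ‖z‖)
    (hS : ∀ z ∈ S, ∀ w ∈ S, ‖z - w‖ * max ‖z‖ ‖w‖ ^ (d - 1) ≤ 2 * ‖z ^ d - w ^ d‖) :
    HasPowerDistortion (‖p.coeff d‖ / 4) (‖p.coeff d‖ * (d + 1)) (fun z => p.eval z) 0 (d - 1)
      S := by
  refine ⟨by positivity, by positivity, fun z hz w hw => ?_, fun z hz w hw => ?_⟩ <;>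
    rw [dist_zero_right, dist_zero_right, dist_eq_norm, dist_eq_norm] <;>
    have herr := (hdom z hz).norm_eval_sub_eval_sub_le (hdom w hw) <;>
    set M := ‖z - w‖ * max ‖z‖ ‖w‖ ^ (d - 1)
  · have hmain : ‖p.coeff d‖ / 2 * M ≤ ‖p.coeff d * (z ^ d - w ^ d)‖ := by
      rw [norm_mul]
      linarith [mul_le_mul_of_nonneg_left (hS z hz w hw) (norm_nonneg (p.coeff d))]
    linarith [norm_sub_norm_le (p.coeff d * (z ^ d - w ^ d)) (p.eval z - p.eval w),
      norm_sub_rev (p.coeff d * (z ^ d - w ^ d)) (p.eval z - p.eval w)]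
  · have hmain : ‖p.coeff d * (z ^ d - w ^ d)‖ ≤ ‖p.coeff d‖ * (d * M) := by
      rw [norm_mul]
      gcongr
      exact norm_pow_sub_pow_le z w d
    have hM : 0 ≤ ‖p.coeff d‖ * M := by positivity
    linarith [norm_sub_norm_le (p.eval z - p.eval w) (p.coeff d * (z ^ d - w ^ d))]

lemma preservesNagataDimOn_eval_of_isDominantDegree {p : 𝕜[X]} {d : ℕ} (hd : d ≠ 0)
    (hpd : p.coeff d ≠ 0) :
    PreservesNagataDimOn (fun z => p.eval z) {z | z ≠ 0 ∧ IsDominantDegree p d ‖z‖} := by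
  have hnormalize : MapsTo NormedSpace.normalize {z : 𝕜 | z ≠ 0 ∧ IsDominantDegree p d ‖z‖}
      (sphere 0 1) := fun z hz => by simpa using NormedSpace.norm_normalize hz.1
  refine preservesNagataDimOn_of_isCompact (isCompact_sphere (0 : 𝕜) 1) hnormalize fun u hu => ?_
  obtain ⟨V, hV, hsector⟩ := exists_nhds_norm_sub_mul_max_pow_le hd (mem_sphere_zero_iff_norm.1 hu)
  refine ⟨V, hV, fun X hX => ?_⟩
  exact (hasPowerDistortion_eval hpd (fun z hz => (hX hz).1.2)
    fun z hz w hw => hsector z w (hX hz).2 (hX hw).2).nagataDim_image fun h => (hX h).1.1 rfl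

lemma eventually_isDominantDegree {p : 𝕜[X]} {d : ℕ} (hpd : p.coeff d ≠ 0) {l : Filter ℝ}
    (hl : ∀ᶠ t in l, 0 ≤ t) (hlittle : ∀ m ∈ p.support.erase d, m ≠ 0 →
      (fun t : ℝ => t ^ (m - 1)) =o[l] fun t => t ^ (d - 1)) :
    ∀ᶠ t in l, IsDominantDegree p d t := by
  have hsum : (fun t : ℝ => ∑ m ∈ p.support.erase d, m * ‖p.coeff m‖ * t ^ (m - 1)) =o[l]
      fun t => t ^ (d - 1) := by
    refine IsLittleO.fun_sum fun m hm => ?_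
    rcases eq_or_ne m 0 with rfl | hm0
    · simp
    · exact (hlittle m hm hm0).const_mul_left _
  filter_upwards [hl, hsum.def (c := ‖p.coeff d‖ / 4) (by positivity)] with t ht hle
  rw [Real.norm_of_nonneg (pow_nonneg ht _)] at hle
  exact (le_abs_self _).trans hle

lemma exists_eventually_isDominantDegree_nhdsGE_zero {p : 𝕜[X]} (hp : p.natDegree ≠ 0) :
    ∃ d ≠ 0, p.coeff d ≠ 0 ∧ ∀ᶠ t in 𝓝[≥] (0 : ℝ), IsDominantDegree p d t := by
  have hlead : p.natDegree ≠ 0 ∧ p.coeff p.natDegree ≠ 0 := by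
    refine ⟨hp, leadingCoeff_ne_zero.2 ?_⟩
    rintro rfl
    exact hp natDegree_zero
  obtain ⟨d, ⟨hd, hpd⟩, hmin⟩ := exists_minimal_of_wellFoundedLT
    (fun m => m ≠ 0 ∧ p.coeff m ≠ 0) ⟨_, hlead⟩
  refine ⟨d, hd, hpd, eventually_isDominantDegree hpd self_mem_nhdsWithin fun m hm hm0 => ?_⟩
  rw [Finset.mem_erase, mem_support_iff] at hm
  have hdm : d ≤ m := (le_total d m).elim id (hmin ⟨hm0, hm.2⟩)
  exact (isLittleO_pow_pow (by omega)).mono nhdsWithin_le_nhds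

lemma eventually_isDominantDegree_natDegree_atTop {p : 𝕜[X]} (hp : p ≠ 0) :
    ∀ᶠ t in atTop, IsDominantDegree p p.natDegree t := by
  refine eventually_isDominantDegree (leadingCoeff_ne_zero.2 hp) (eventually_ge_atTop 0)
    fun m hm hm0 => isLittleO_pow_pow_atTop_of_lt ?_
  rw [Finset.mem_erase] at hm
  have hmp := le_natDegree_of_mem_supp m hm.2
  omega

lemma exists_mem_nhds_zero_preservesNagataDimOn_eval {p : 𝕜[X]} (hp : p.natDegree ≠ 0) :
    ∃ V ∈ 𝓝 (0 : 𝕜), PreservesNagataDimOn (fun z => p.eval z) V := by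
  obtain ⟨d, hd, hpd, hdom⟩ := exists_eventually_isDominantDegree_nhdsGE_zero hp
  have hnorm : Tendsto (norm : 𝕜 → ℝ) (𝓝 0) (𝓝[≥] 0) :=
    tendsto_nhdsWithin_iff.2 ⟨tendsto_norm_zero, .of_forall norm_nonneg⟩
  refine ⟨_, hnorm.eventually hdom, ((preservesNagataDimOn_eval_of_isDominantDegree hd hpd).union
    (preservesNagataDimOn_of_subsingleton _ subsingleton_singleton (S := {0}))).mono ?_⟩
  intro z hz
  rcases eq_or_ne z 0 with rfl | hz0
  · exact .inr rfl
  · exact .inl ⟨hz0, hz⟩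

lemma exists_mem_nhds_preservesNagataDimOn_eval {p : 𝕜[X]} (hp : p.natDegree ≠ 0) (c : 𝕜) :
    ∃ V ∈ 𝓝 c, PreservesNagataDimOn (fun z => p.eval z) V := by
  obtain ⟨V, hV, hpres⟩ :=
    exists_mem_nhds_zero_preservesNagataDimOn_eval (p := taylor c p) (by rwa [natDegree_taylor])
  have htaylor : (fun z => (taylor c p).eval z) ∘ (fun z => z - c) = fun z => p.eval z :=
    funext fun z => taylor_eval_sub c p z
  have hsub : Tendsto (fun z => z - c) (𝓝 c) (𝓝 0) := by
    simpa using (continuous_sub_right c).tendsto c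
  exact ⟨_, hsub hV, htaylor ▸ hpres.comp_isometry (IsometryEquiv.subRight c).isometry⟩

lemma exists_preservesNagataDimOn_eval_compl_closedBall {p : 𝕜[X]} (hp : p.natDegree ≠ 0) :
    ∃ R, PreservesNagataDimOn (fun z => p.eval z) (closedBall 0 R)ᶜ := by
  have hp0 : p ≠ 0 := by
    rintro rfl
    exact hp natDegree_zero
  obtain ⟨R, hR⟩ := eventually_atTop.1 (eventually_isDominantDegree_natDegree_atTop hp0)
  refine ⟨max R 0, (preservesNagataDimOn_eval_of_isDominantDegree hp
    (leadingCoeff_ne_zero.2 hp0)).mono fun z hz => ?_⟩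
  rw [mem_compl_iff, mem_closedBall_zero_iff, not_le, max_lt_iff] at hz
  exact ⟨norm_pos_iff.1 hz.2, hR _ hz.1.le⟩

theorem polynomial_preserves_nagataDim_general (p : 𝕜[X]) (hp : 1 ≤ p.natDegree) (X : Set 𝕜) :
    nagataDim ((fun z => p.eval z) '' X) = nagataDim X := by
  have hp' : p.natDegree ≠ 0 := by omega
  obtain ⟨R, hinfinity⟩ := exists_preservesNagataDimOn_eval_compl_closedBall hp'
  have hball : PreservesNagataDimOn (fun z => p.eval z) (closedBall (0 : 𝕜) R) :=
    preservesNagataDimOn_of_isCompact (isCompact_closedBall 0 R) (mapsTo_id _) fun c _ =>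
      let ⟨V, hV, hpres⟩ := exists_mem_nhds_preservesNagataDimOn_eval hp' c
      ⟨V, hV, hpres.mono inter_subset_right⟩
  exact hball.union hinfinity X (by rw [union_compl_self]; exact subset_univ X)

end Polynomial

/-- A non-constant polynomial preserves the Nagata dimension of
every subset of `ℂ`. -/
theorem polynomial_preserves_nagataDim (p : Polynomial ℂ) (hp : 1 ≤ p.natDegree)
    (X : Set ℂ) :
    nagataDim ((fun z => p.eval z) '' X) = nagataDim X := by
  exact polynomial_preserves_nagataDim_general p hp X
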